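/- Let $w \in F_2$ be cyclically reduced of length at least 1, and suppose that as a cyclic word $w$ contains a block $a^m$ with $|m| \ge |w'|+2$ and a block $b^k$ with $|k| \ge |w'|+2$ for some word $w'$. Then $w$ is not an automorphic image of $w'$. -/

import Mathlib

open FreeGroup List

abbrev F2 := FreeGroup (Fin 2)

/-- The generator `a` of `F₂`. -/
def ga : F2 := FreeGroup.of 0

/-- The generator `b` of `F₂`. -/
def gb : F2 := FreeGroup.of 1

/-- `v` contains a block `x^{±k}`: `k` consecutive occurrences of the letter `x`
with the same sign, as a contiguous subword of the reduced word of `v`.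
Thus "every `x`-exponent of `v` has absolute value `≤ n`" is `¬ HasBlock x (n+1) v`. -/
def HasBlock (x : Fin 2) (k : ℕ) (v : F2) : Prop :=
  (List.replicate k (x, true)) <:+: v.toWord ∨ (List.replicate k (x, false)) <:+: v.toWord

/-- A reduced word is cyclically reduced if its last letter is not
the inverse of its first letter. -/
def CyclicallyReduced (l : List (Fin 2 × Bool)) : Prop :=
  ∀ p ∈ l.head?, ∀ q ∈ l.getLast?, q ≠ (p.1, !p.2)

/-- `(x, y)` is a basis of `F₂`: the image of `(a, b)` under an automorphism. -/
def IsBasis (x y : F2) : Prop := ∃ φ : F2 ≃* F2, φ ga = x ∧ φ gb = y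

/-!
Minimising the total length over Nielsen moves and conjugations turns any generating pair of `F₂`
into the pair of letters. Read backwards, an automorphism `φ` takes `(a, b)` to a pair obtained
from the letters by such moves, and up to inverting each entry and conjugating both by the same `g`,
swaps and multiplications suffice: the pair consists of positive words in `a ^ ±1` and `b ^ ±1`.
The first multiplication separates all occurrences of one of the letters, so there is a letter `i`
which is nowhere followed by itself in `g * φ a * g⁻¹` and `g * φ b * g⁻¹`.

The number of repetitions of `i` in a reduced word is subadditive up to an error of one, so it is at
most `‖w'‖` in `g * φ w' * g⁻¹` and, up to a constant, in every conjugate. For a cyclically reduced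
conjugate `c` the constant disappears on passing to powers, because `c ^ n` has at least `n` times
the repetitions of `c`. A block of length `‖w'‖ + 2` in `c` would give `‖w'‖ + 1` of them.
-/

section CommonPrefix

variable {α : Type*} [DecidableEq α]

/-- The length of the longest common prefix of two lists. -/
def commonPrefixLength : List α → List α → ℕ
  | a :: l, b :: m => if a = b then commonPrefixLength l m + 1 else 0
  | _, _ => 0

theorem commonPrefixLength_comm (l m : List α) :
    commonPrefixLength l m = commonPrefixLength m l := by
  induction l generalizing m with
  | nil => cases m <;> rfl
  | cons a l ih => cases m <;> simp [commonPrefixLength, ih, eq_comm]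

theorem commonPrefixLength_append (l m : List α) : commonPrefixLength l (l ++ m) = l.length := by
  induction l with
  | nil => cases m <;> rfl
  | cons a l ih => simp [commonPrefixLength, ih]

theorem min_commonPrefixLength_le (l m n : List α) :
    min (commonPrefixLength l m) (commonPrefixLength m n) ≤ commonPrefixLength l n := by
  induction l generalizing m n with
  | nil => cases m <;> simp [commonPrefixLength]
  | cons a l ih =>
    cases m with
    | nil => simp [commonPrefixLength]
    | cons b m =>
      cases n with
      | nil => simp [commonPrefixLength]
      | cons c n =>
        have := ih m n
        simp only [commonPrefixLength]
        split_ifs <;> first | omega | simp_all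

theorem exists_eq_append_commonPrefix (l m : List α) :
    ∃ p s t, l = p ++ s ∧ m = p ++ t ∧ p.length = commonPrefixLength l m ∧
      ∀ a ∈ s.head?, ∀ b ∈ t.head?, a ≠ b := by
  induction l generalizing m with
  | nil => exact ⟨[], [], m, by simp [commonPrefixLength]⟩
  | cons a l ih =>
    cases m with
    | nil => exact ⟨[], a :: l, [], by simp [commonPrefixLength]⟩
    | cons b m =>
      by_cases h : a = b
      · obtain ⟨p, s, t, rfl, rfl, hp, hst⟩ := ih m
        exact ⟨a :: p, s, t, by simp, by simp [h], by simp [commonPrefixLength, h, hp], hst⟩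
      · exact ⟨[], a :: l, b :: m, by simp [commonPrefixLength, h]⟩

end CommonPrefix

section GromovProduct

variable {α : Type*}

theorem isReduced_invRev {l : List (α × Bool)} (h : IsReduced l) : IsReduced (invRev l) := by
  classical
  rw [isReduced_iff_reduce_eq, reduce_invRev, h.reduce_eq]

theorem isReduced_invRev_append {s t : List (α × Bool)} (hs : IsReduced s) (ht : IsReduced t)
    (h : ∀ a ∈ s.head?, ∀ b ∈ t.head?, a ≠ b) : IsReduced (invRev s ++ t) := by
  refine List.isChain_append.2 ⟨isReduced_invRev hs, ht, fun a ha b hb hab => ?_⟩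
  have hlast : (invRev s).getLast? = s.head?.map fun a => (a.1, !a.2) := by simp [invRev]
  obtain ⟨c, hc, rfl⟩ := Option.mem_map.1 (hlast ▸ ha)
  exact Bool.not_eq.2 fun hcb => h c hc b hb (Prod.ext hab hcb)

variable [DecidableEq α]

/-- The length of the longest common prefix of the reduced words of `x` and `y`, which is the Gromov
product of `x` and `y` based at `1` in the Cayley tree. In particular `gromovProd x⁻¹ y` is the
number of letters of `x`, and of `y`, that cancel in the product `x * y`. -/
def gromovProd (x y : FreeGroup α) : ℕ := commonPrefixLength x.toWord y.toWord

theorem gromovProd_comm (x y : FreeGroup α) : gromovProd x y = gromovProd y x :=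
  commonPrefixLength_comm _ _

theorem gromovProd_of_prefix {p x : FreeGroup α} (h : p.toWord <+: x.toWord) :
    gromovProd p x = p.norm := by
  obtain ⟨s, hs⟩ := h
  rw [gromovProd, ← hs, commonPrefixLength_append, FreeGroup.norm]

theorem min_gromovProd_le (x y z : FreeGroup α) :
    min (gromovProd x y) (gromovProd y z) ≤ gromovProd x z :=
  min_commonPrefixLength_le _ _ _

theorem exists_toWord_inv_mul (x y : FreeGroup α) :
    ∃ p s t, x.toWord = p ++ s ∧ y.toWord = p ++ t ∧ p.length = gromovProd x y ∧
      (x⁻¹ * y).toWord = invRev s ++ t := by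
  obtain ⟨p, s, t, hx, hy, hp, hst⟩ := exists_eq_append_commonPrefix x.toWord y.toWord
  refine ⟨p, s, t, hx, hy, hp, ?_⟩
  have hs : IsReduced s := isReduced_toWord.infix (hx ▸ (List.suffix_append p s).isInfix)
  have ht : IsReduced t := isReduced_toWord.infix (hy ▸ (List.suffix_append p t).isInfix)
  have hxy : x⁻¹ * y = mk (invRev s ++ t) := by
    rw [← mk_toWord (x := x), ← mk_toWord (x := y), hx, hy, ← mul_mk, ← mul_mk, ← mul_mk,
      ← inv_mk]
    group
  rw [hxy, toWord_mk, (isReduced_invRev_append hs ht hst).reduce_eq]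

theorem exists_prefix_norm_eq_gromovProd (x y : FreeGroup α) :
    ∃ p : FreeGroup α, p.norm = gromovProd x y ∧ p.toWord <+: x.toWord ∧
      p.toWord <+: y.toWord := by
  obtain ⟨p, s, t, hx, hy, hp, -⟩ := exists_toWord_inv_mul x y
  have hp' : (mk p).toWord = p := by
    rw [toWord_mk]
    exact (isReduced_toWord.infix (hx ▸ (List.prefix_append p s).isInfix)).reduce_eq
  exact ⟨mk p, by rw [FreeGroup.norm, hp', hp], hp'.symm ▸ ⟨s, hx.symm⟩, hp'.symm ▸ ⟨t, hy.symm⟩⟩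

theorem norm_inv_mul_add_gromovProd (x y : FreeGroup α) :
    (x⁻¹ * y).norm + 2 * gromovProd x y = x.norm + y.norm := by
  obtain ⟨p, s, t, hx, hy, hp, h⟩ := exists_toWord_inv_mul x y
  simp only [FreeGroup.norm, hx, hy, h, ← hp, List.length_append, invRev_length]
  omega

theorem norm_mul_add_gromovProd (x y : FreeGroup α) :
    (x * y).norm + 2 * gromovProd x⁻¹ y = x.norm + y.norm := by
  simpa using norm_inv_mul_add_gromovProd x⁻¹ y

theorem norm_inv_mul_mul_add_le {x p q : FreeGroup α} (hp : p.toWord <+: x.toWord)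
    (hq : q.toWord <+: x⁻¹.toWord) (hpq : p.norm + q.norm ≤ x.norm) :
    (p⁻¹ * x * q).norm + p.norm + q.norm ≤ x.norm := by
  have hp' := gromovProd_of_prefix hp
  have hq' := gromovProd_of_prefix hq
  have h_left := norm_inv_mul_add_gromovProd p x
  have h_right := norm_mul_add_gromovProd (p⁻¹ * x) q
  have h_undo := norm_inv_mul_add_gromovProd (p⁻¹ * x)⁻¹ x⁻¹
  have h_ultra := min_gromovProd_le (p⁻¹ * x)⁻¹ x⁻¹ q
  rw [inv_inv, mul_inv_cancel_right, norm_inv_eq, norm_inv_eq, norm_inv_eq] at h_undo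
  rw [gromovProd_comm x⁻¹ q] at h_ultra
  omega

/-- Conjugating `x` to a cyclically reduced element `c ≠ 1` by `g` gives
`‖x * x‖ = 2 * ‖g‖ + 2 * ‖c‖`, whereas `‖x‖ = 2 * ‖g‖ + ‖c‖`. -/
theorem norm_lt_norm_mul_self {x : FreeGroup α} (hx : x ≠ 1) : x.norm < (x * x).norm := by
  set g := reduceCyclically.conjugator x.toWord
  set c := reduceCyclically x.toWord
  have h_word : g ++ c ++ invRev g = x.toWord :=
    reduceCyclically.conj_conjugator_reduceCyclically x.toWord
  have h_sq : (x * x).toWord = g ++ (List.replicate 2 c).flatten ++ invRev g := by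
    rw [← pow_two, toWord_pow]
    exact reduceCyclically.reduce_flatten_replicate_succ isReduced_toWord 1
  have hc : 0 < c.length := by
    refine List.length_pos_iff.2 fun hc => hx ?_
    rw [← mk_toWord (x := x), ← h_word, hc, List.append_nil, ← mul_mk, ← inv_mk, mul_inv_cancel]
  rw [FreeGroup.norm, FreeGroup.norm, h_sq, ← h_word]
  simp only [List.replicate_succ, List.replicate_zero, List.flatten_cons, List.flatten_nil,
    List.length_append, List.length_nil, invRev_length]
  omega

theorem two_mul_gromovProd_inv_self_lt {x : FreeGroup α} (hx : x ≠ 1) :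
    2 * gromovProd x⁻¹ x < x.norm := by
  have h_sq := norm_lt_norm_mul_self hx
  have h_mul := norm_mul_add_gromovProd x x
  omega

end GromovProduct

section NielsenReduced

variable {α β : Type*} [DecidableEq α]

/-- Nielsen's conditions on the values of `f` on the letters `x ^ ±1`: none of them is trivial, two
consecutive factors cancel in at most half of each of them, and no factor is entirely cancelled by
its two neighbours. -/
structure IsNielsenReduced (f : FreeGroup β →* FreeGroup α) : Prop where
  protected mk ::
  map_letter_ne_one : ∀ x, f (mk [x]) ≠ 1
  two_mul_gromovProd_le : ∀ x y, IsReduced [x, y] →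
    2 * gromovProd (f (mk [x]))⁻¹ (f (mk [y])) ≤ min (f (mk [x])).norm (f (mk [y])).norm
  gromovProd_add_lt : ∀ x y z, IsReduced [x, y, z] →
    gromovProd (f (mk [x]))⁻¹ (f (mk [y])) + gromovProd (f (mk [y]))⁻¹ (f (mk [z])) <
      (f (mk [y])).norm

theorem map_mk_cons {G : Type*} [Group G] (f : FreeGroup β →* G) (x : β × Bool)
    (l : List (β × Bool)) : f (mk (x :: l)) = f (mk [x]) * f (mk l) := by
  rw [← _root_.map_mul, mul_mk, List.singleton_append]

namespace IsNielsenReduced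

variable {f : FreeGroup β →* FreeGroup α}

theorem norm_map_letter_pos (hf : IsNielsenReduced f) (x : β × Bool) : 0 < (f (mk [x])).norm :=
  Nat.pos_of_ne_zero fun h => hf.map_letter_ne_one x (FreeGroup.norm_eq_zero.1 h)

/-- The letters of `f y` not reached by cancellation from its neighbours shield `f x` from the rest
of the word. -/
theorem gromovProd_map_cons_cons (hf : IsNielsenReduced f) {x y : β × Bool} {l : List (β × Bool)}
    (h : IsReduced (x :: y :: l)) :
    gromovProd (f (mk [x]))⁻¹ (f (mk (y :: l))) = gromovProd (f (mk [x]))⁻¹ (f (mk [y])) ∧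
      gromovProd (f (mk [x]))⁻¹ (f (mk [y])) + l.length < (f (mk (y :: l))).norm := by
  induction l generalizing x y with
  | nil =>
    have h_half := hf.two_mul_gromovProd_le x y h
    have h_pos := hf.norm_map_letter_pos y
    exact ⟨rfl, by rw [List.length_nil]; omega⟩
  | cons z l ih =>
    have hxyz : IsReduced [x, y, z] := h.infix (List.prefix_append [x, y, z] l).isInfix
    obtain ⟨ih_prod, ih_norm⟩ := ih (h.infix (List.suffix_cons x _).isInfix)
    have h_lt := hf.gromovProd_add_lt x y z hxyz
    rw [map_mk_cons f y (z :: l), List.length_cons]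
    set u := (f (mk [x]))⁻¹
    set v := f (mk [y])
    set w := f (mk (z :: l))
    have h_vw := norm_mul_add_gromovProd v w
    have h_v_vw := norm_inv_mul_add_gromovProd v (v * w)
    rw [inv_mul_cancel_left] at h_v_vw
    have h_ultra := min_gromovProd_le u v (v * w)
    have h_ultra' := min_gromovProd_le u (v * w) v
    rw [gromovProd_comm (v * w) v] at h_ultra'
    omega

theorem length_le_norm_map (hf : IsNielsenReduced f) {l : List (β × Bool)} (h : IsReduced l) :
    l.length ≤ (f (mk l)).norm := by
  match l, h with
  | [], _ => exact Nat.zero_le _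
  | [x], _ => exact hf.norm_map_letter_pos x
  | x :: y :: l, h =>
    obtain ⟨h_prod, h_norm⟩ := hf.gromovProd_map_cons_cons h
    have h_mul := norm_mul_add_gromovProd (f (mk [x])) (f (mk (y :: l)))
    have h_half := hf.two_mul_gromovProd_le x y (h.infix (List.prefix_append [x, y] l).isInfix)
    have h_pos := hf.norm_map_letter_pos x
    rw [map_mk_cons f x (y :: l), List.length_cons, List.length_cons]
    omega

theorem exists_map_letter_eq_of (hf : IsNielsenReduced f) {i : α} (hi : of i ∈ f.range) :
    ∃ x, f (mk [x]) = of i := by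
  classical
  obtain ⟨g, hg⟩ := hi
  have h_len := hf.length_le_norm_map (isReduced_toWord (x := g))
  rw [mk_toWord, hg, norm_of] at h_len
  rw [← mk_toWord (x := g)] at hg
  match h_word : g.toWord, h_len with
  | [], _ => simp [h_word, ← one_eq_mk] at hg
  | [x], _ => exact ⟨x, h_word ▸ hg⟩

end IsNielsenReduced

end NielsenReduced

section NielsenEquiv

variable {G : Type*} [Group G]

/-- Nielsen equivalence of pairs of elements up to simultaneous conjugation: `NielsenEquiv u v p q`
says that `(p, q)` is obtained from `(u, v)` by elementary Nielsen moves and conjugations. -/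
inductive NielsenEquiv (u v : G) : G → G → Prop
  | refl : NielsenEquiv u v u v
  | swap {p q : G} : NielsenEquiv u v p q → NielsenEquiv u v q p
  | inv {p q : G} : NielsenEquiv u v p q → NielsenEquiv u v p⁻¹ q
  | mul {p q : G} : NielsenEquiv u v p q → NielsenEquiv u v (p * q) q
  | conj {p q : G} (g : G) :
      NielsenEquiv u v p q → NielsenEquiv u v (g * p * g⁻¹) (g * q * g⁻¹)

theorem eq_or_eq_not_of_fst_eq {β : Type*} {x y : β × Bool} (h : x.1 = y.1) :
    x = y ∨ x = (y.1, !y.2) :=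
  (Bool.eq_or_eq_not x.2 y.2).imp (Prod.ext h) (Prod.ext h)

theorem lift_mk_not (u v : G) (i : Fin 2) (e : Bool) :
    lift ![u, v] (mk [(i, !e)]) = (lift ![u, v] (mk [(i, e)]))⁻¹ := by
  cases e <;> simp

theorem lift_letters_of_swap_of_inv {r : G → G → Prop} (swap : ∀ {p q}, r p q → r q p)
    (inv : ∀ {p q}, r p q → r p⁻¹ q) {u v : G} (h : r u v) {x y : Fin 2 × Bool}
    (hxy : x.1 ≠ y.1) : r (lift ![u, v] (mk [x])) (lift ![u, v] (mk [y])) := by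
  have h_sign : ∀ {p q} (e e' : Bool), r p q → r (cond e p p⁻¹) (cond e' q q⁻¹) := by
    rintro p q (_ | _) (_ | _) hpq
    exacts [inv (swap (inv (swap hpq))), inv hpq, swap (inv (swap hpq)), hpq]
  obtain ⟨i, e⟩ := x
  obtain ⟨j, e'⟩ := y
  fin_cases i <;> fin_cases j
  · exact absurd rfl hxy
  · simpa [lift_mk] using h_sign e e' h
  · simpa [lift_mk] using h_sign e e' (swap h)
  · exact absurd rfl hxy

namespace NielsenEquiv

variable {u v p q r s : G}

theorem trans (h : NielsenEquiv u v p q) (h' : NielsenEquiv p q r s) : NielsenEquiv u v r s := by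
  induction h' with
  | refl => exact h
  | swap _ ih => exact ih.swap
  | inv _ ih => exact ih.inv
  | mul _ ih => exact ih.mul
  | conj g _ ih => exact ih.conj g

theorem of_mul (u v : G) : NielsenEquiv (u * v) v u v := by
  simpa using (refl (u := u * v) (v := v)).swap.inv.swap.mul.swap.inv.swap

theorem symm (h : NielsenEquiv u v p q) : NielsenEquiv p q u v := by
  induction h with
  | refl => exact refl
  | swap _ ih => exact refl.swap.trans ih
  | @inv p q _ ih =>
    have h_undo : NielsenEquiv p⁻¹ q p q := by simpa using (refl (u := p⁻¹) (v := q)).inv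
    exact h_undo.trans ih
  | mul _ ih => exact (of_mul _ _).trans ih
  | @conj p q g _ ih =>
    have h_undo : NielsenEquiv (g * p * g⁻¹) (g * q * g⁻¹) p q := by
      simpa [mul_assoc] using (refl (u := g * p * g⁻¹) (v := g * q * g⁻¹)).conj g⁻¹
    exact h_undo.trans ih

theorem closure_pair_eq_top (h : NielsenEquiv u v p q) (huv : Subgroup.closure {u, v} = ⊤) :
    Subgroup.closure {p, q} = ⊤ := by
  have h_of_mem : ∀ {p q p' q' : G}, Subgroup.closure {p, q} = ⊤ →
      p ∈ Subgroup.closure {p', q'} → q ∈ Subgroup.closure {p', q'} →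
      Subgroup.closure {p', q'} = ⊤ := fun hpq hp hq =>
    top_le_iff.1 (hpq ▸ (Subgroup.closure_le _).2 (Set.pair_subset hp hq))
  have h_left : ∀ p q : G, p ∈ Subgroup.closure {p, q} := fun p q =>
    Subgroup.subset_closure (Set.mem_insert p {q})
  have h_right : ∀ p q : G, q ∈ Subgroup.closure {p, q} := fun p q =>
    Subgroup.subset_closure (Set.mem_insert_of_mem p rfl)
  induction h with
  | refl => exact huv
  | swap _ ih => rwa [Set.pair_comm]
  | inv _ ih => exact h_of_mem ih (inv_mem_iff.1 (h_left _ _)) (h_right _ _)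
  | mul _ ih =>
    exact h_of_mem ih ((mul_mem_cancel_right (h_right _ _)).1 (h_left _ _)) (h_right _ _)
  | @conj p q g _ ih =>
    have h_map :=
      Subgroup.map_top_of_surjective (MulAut.conj g).toMonoidHom (MulAut.conj g).surjective
    rw [← ih, MonoidHom.map_closure, Set.image_pair, ih] at h_map
    exact h_map

end NielsenEquiv

theorem left_ne_one_of_closure_pair_eq_top (hG : ¬ IsCyclic G) {u v : G}
    (h : Subgroup.closure {u, v} = ⊤) : u ≠ 1 := by
  rintro rfl
  rw [Subgroup.closure_insert_one, ← Subgroup.zpowers_eq_closure] at h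
  exact hG (isCyclic_iff_exists_zpowers_eq_top.2 ⟨v, h⟩)

end NielsenEquiv

section NielsenMinimal

variable {α : Type*} [DecidableEq α]

/-- The pair `(u, v)` has minimal total length among the pairs obtained from it by Nielsen moves and
conjugations. -/
def IsNielsenMinimal (u v : FreeGroup α) : Prop :=
  ∀ p q, NielsenEquiv u v p q → u.norm + v.norm ≤ p.norm + q.norm

theorem exists_nielsenEquiv_isNielsenMinimal (u v : FreeGroup α) :
    ∃ p q, NielsenEquiv u v p q ∧ IsNielsenMinimal p q := by
  let S : Set (FreeGroup α × FreeGroup α) := {z | NielsenEquiv u v z.1 z.2}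
  let size : FreeGroup α × FreeGroup α → ℕ := fun z => z.1.norm + z.2.norm
  have hS : S.Nonempty := ⟨(u, v), .refl⟩
  have h_mem : Function.argminOn size S hS ∈ S := Function.argminOn_mem size S hS
  exact ⟨_, _, h_mem, fun p q hpq =>
    Function.argminOn_le size S (a := (p, q)) (NielsenEquiv.trans h_mem hpq)⟩

namespace IsNielsenMinimal

variable {u v : FreeGroup α}

theorem swap (h : IsNielsenMinimal u v) : IsNielsenMinimal v u := fun p q hpq =>
  add_comm u.norm v.norm ▸ h p q (NielsenEquiv.refl.swap.trans hpq)

theorem inv (h : IsNielsenMinimal u v) : IsNielsenMinimal u⁻¹ v := fun p q hpq => by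
  rw [norm_inv_eq]
  exact h p q (NielsenEquiv.refl.inv.trans hpq)

theorem norm_left_le_norm_mul (h : IsNielsenMinimal u v) : u.norm ≤ (u * v).norm :=
  Nat.add_le_add_iff_right.1 (h _ _ NielsenEquiv.refl.mul)

theorem norm_right_le_norm_mul (h : IsNielsenMinimal u v) : v.norm ≤ (u * v).norm := by
  simpa [← mul_inv_rev] using h.inv.swap.inv.norm_left_le_norm_mul

theorem two_mul_gromovProd_le (h : IsNielsenMinimal u v) :
    2 * gromovProd u⁻¹ v ≤ min u.norm v.norm := by
  have h_left := h.norm_left_le_norm_mul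
  have h_right := h.norm_right_le_norm_mul
  have h_mul := norm_mul_add_gromovProd u v
  omega

/-- If `v` cancelled entirely in `u * v * u`, then `u = q * m * p⁻¹` and `v = p * q⁻¹`, so that
`(u * v, v)` would be conjugate to the shorter pair `(m, q⁻¹ * p)`. -/
theorem gromovProd_add_lt (h : IsNielsenMinimal u v) (hv : v ≠ 1) :
    gromovProd u⁻¹ v + gromovProd v⁻¹ u < v.norm := by
  have h_uv := h.two_mul_gromovProd_le
  have h_vu := h.swap.two_mul_gromovProd_le
  obtain ⟨p, hp, hpu, hpv⟩ := exists_prefix_norm_eq_gromovProd u⁻¹ v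
  obtain ⟨q, hq, hqv, hqu⟩ := exists_prefix_norm_eq_gromovProd v⁻¹ u
  by_contra! h_ge
  have h_v : p⁻¹ * v * q = 1 := by
    have := norm_inv_mul_mul_add_le hpv hqv (by omega)
    exact FreeGroup.norm_eq_zero.1 (by omega)
  have h_u : (q⁻¹ * u * p).norm + q.norm + p.norm ≤ u.norm :=
    norm_inv_mul_mul_add_le hqu hpu (by omega)
  have h_min := h _ _ (NielsenEquiv.refl.mul.conj q⁻¹)
  obtain rfl : v = p * q⁻¹ := by
    rwa [mul_eq_one_iff_eq_inv, inv_mul_eq_iff_eq_mul] at h_v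
  have h_pq := norm_mul_le q⁻¹ p
  have h_pos := Nat.pos_of_ne_zero (mt FreeGroup.norm_eq_zero.1 hv)
  simp only [inv_inv, mul_assoc, inv_mul_cancel, mul_one, norm_inv_eq] at h_min h_pq h_u
  omega

theorem gromovProd_inv_add_lt (h : IsNielsenMinimal u v) (hv : v ≠ 1) :
    gromovProd u⁻¹ v + gromovProd v⁻¹ u⁻¹ < v.norm := by
  have h_uv := h.two_mul_gromovProd_le
  have h_vu := h.inv.swap.two_mul_gromovProd_le
  have h_vv := two_mul_gromovProd_inv_self_lt hv
  have h_ultra := min_gromovProd_le v⁻¹ u⁻¹ v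
  omega

theorem lift_letters (h : IsNielsenMinimal u v) {x y : Fin 2 × Bool} (hxy : x.1 ≠ y.1) :
    IsNielsenMinimal (lift ![u, v] (mk [x])) (lift ![u, v] (mk [y])) :=
  lift_letters_of_swap_of_inv (r := IsNielsenMinimal) swap inv h hxy

theorem isNielsenReduced_lift (h : IsNielsenMinimal u v) (hu : u ≠ 1) (hv : v ≠ 1) :
    IsNielsenReduced (lift ![u, v]) := by
  have h_ne : ∀ x, lift ![u, v] (mk [x]) ≠ 1 := by
    rintro ⟨i, e⟩
    fin_cases i <;> cases e <;> simpa [lift_mk]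
  have h_self := fun x => two_mul_gromovProd_inv_self_lt (h_ne x)
  have h_half : ∀ x y, IsReduced [x, y] →
      2 * gromovProd (lift ![u, v] (mk [x]))⁻¹ (lift ![u, v] (mk [y])) ≤
        min (lift ![u, v] (mk [x])).norm (lift ![u, v] (mk [y])).norm := by
    intro x y hxy
    by_cases h_eq : x.1 = y.1
    · obtain rfl : x = y := Prod.ext h_eq ((isReduced_cons_cons.1 hxy).1 h_eq)
      exact (min_self (lift ![u, v] (mk [x])).norm).symm ▸ (h_self x).le
    · exact (h.lift_letters h_eq).two_mul_gromovProd_le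
  refine .mk h_ne h_half fun x y z hxyz => ?_
  obtain ⟨hxy, hyz, -⟩ := by simpa only [isReduced_cons_cons] using hxyz
  have h_xy := h_half x y (by simpa [isReduced_cons_cons] using hxy)
  have h_yz := h_half y z (by simpa [isReduced_cons_cons] using hyz)
  by_cases hx : x.1 = y.1
  · obtain rfl : x = y := Prod.ext hx (hxy hx)
    have := h_self x
    omega
  by_cases hz : y.1 = z.1
  · obtain rfl : y = z := Prod.ext hz (hyz hz)
    have := h_self y
    omega
  obtain rfl | rfl : z = x ∨ z = (x.1, !x.2) := eq_or_eq_not_of_fst_eq (by omega)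
  · exact (h.lift_letters hx).gromovProd_add_lt (h_ne y)
  · rw [lift_mk_not u v x.1 x.2]
    exact (h.lift_letters hx).gromovProd_inv_add_lt (h_ne y)

end IsNielsenMinimal

theorem IsNielsenReduced.nielsenEquiv {u v : F2} (h : IsNielsenReduced (lift ![u, v]))
    (huv : Subgroup.closure {u, v} = ⊤) : NielsenEquiv u v (of 0) (of 1) := by
  have h_range : (lift ![u, v]).range = ⊤ := by
    rw [← huv, range_lift_eq_closure]
    simp [Set.pair_comm]
  obtain ⟨x, hx⟩ := h.exists_map_letter_eq_of (i := 0) (h_range ▸ Subgroup.mem_top _)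
  obtain ⟨y, hy⟩ := h.exists_map_letter_eq_of (i := 1) (h_range ▸ Subgroup.mem_top _)
  have hxy : x.1 ≠ y.1 := by
    intro hxy
    obtain rfl | rfl := eq_or_eq_not_of_fst_eq hxy
    · exact absurd (hx.symm.trans hy) (by decide)
    · rw [lift_mk_not, hy] at hx
      exact absurd hx (by decide)
  rw [← hx, ← hy]
  exact lift_letters_of_swap_of_inv .swap .inv .refl hxy

theorem not_isCyclic_F2 : ¬ IsCyclic F2 := fun h =>
  absurd ((IsCyclic.isMulCommutative (α := F2)).is_comm.comm (of 0) (of 1)) (by decide)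

/-- Nielsen's theorem in rank two. -/
theorem nielsenEquiv_of_closure_pair_eq_top {u v : F2} (h : Subgroup.closure {u, v} = ⊤) :
    NielsenEquiv (of 0) (of 1) u v := by
  obtain ⟨p, q, hpq, h_min⟩ := exists_nielsenEquiv_isNielsenMinimal u v
  have h_top := hpq.closure_pair_eq_top h
  have hp : p ≠ 1 := left_ne_one_of_closure_pair_eq_top not_isCyclic_F2 h_top
  have hq : q ≠ 1 :=
    left_ne_one_of_closure_pair_eq_top not_isCyclic_F2 (Set.pair_comm p q ▸ h_top)
  exact (hpq.trans ((h_min.isNielsenReduced_lift hp hq).nielsenEquiv h_top)).symm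

end NielsenMinimal

section PositivePair

/-- `PositivePair x y p q` says that `(p, q)` is obtained from `(x, y)` by swapping the entries and
multiplying the first entry by the second one, so that both are positive words in `x`, `y`. -/
inductive PositivePair {M : Type*} [Mul M] (x y : M) : M → M → Prop
  | base : PositivePair x y x y
  | swap {p q : M} : PositivePair x y p q → PositivePair x y q p
  | mul {p q : M} : PositivePair x y p q → PositivePair x y (p * q) q

/-- The first multiplication `(x, y) ↦ (x * y, y)` puts a `y` after every `x`, and all later moves
stay within the words with this property. -/
theorem PositivePair.eq_or_mem_closure {M : Type*} [Monoid M] {x y p q : M}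
    (h : PositivePair x y p q) :
    (p = x ∧ q = y ∨ p = y ∧ q = x) ∨
      (p ∈ Submonoid.closure {x * y, y} ∧ q ∈ Submonoid.closure {x * y, y}) ∨
      (p ∈ Submonoid.closure {y * x, x} ∧ q ∈ Submonoid.closure {y * x, x}) := by
  have h_mem : ∀ x y : M, x * y ∈ Submonoid.closure {x * y, y} ∧ y ∈ Submonoid.closure {x * y, y} :=
    fun x y => ⟨Submonoid.subset_closure (.inl rfl), Submonoid.subset_closure (.inr rfl)⟩
  induction h with
  | base => exact .inl (.inl ⟨rfl, rfl⟩)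
  | swap _ ih => tauto
  | mul _ ih =>
    obtain (⟨rfl, rfl⟩ | ⟨rfl, rfl⟩) | ⟨hp, hq⟩ | ⟨hp, hq⟩ := ih
    · exact .inr (.inl (h_mem _ _))
    · exact .inr (.inr (h_mem _ _))
    · exact .inr (.inl ⟨mul_mem hp hq, hq⟩)
    · exact .inr (.inr ⟨mul_mem hp hq, hq⟩)

variable {α : Type*} {i j : α}

/-- Up to inversion of each entry and simultaneous conjugation, the pair is a positive pair in
letters `i ^ ±1` and `j ^ ±1`. Unlike positivity, this property is preserved by Nielsen moves. -/
inductive SignedPositivePair (i j : α) : FreeGroup α → FreeGroup α → Prop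
  | of_positive {e e' : Bool} {p q : FreeGroup α} :
      PositivePair (mk [(i, e)]) (mk [(j, e')]) p q → SignedPositivePair i j p q
  | inv_left {p q : FreeGroup α} : SignedPositivePair i j p q → SignedPositivePair i j p⁻¹ q
  | inv_right {p q : FreeGroup α} : SignedPositivePair i j p q → SignedPositivePair i j p q⁻¹
  | conj {p q : FreeGroup α} (g : FreeGroup α) :
      SignedPositivePair i j p q → SignedPositivePair i j (g * p * g⁻¹) (g * q * g⁻¹)

theorem SignedPositivePair.swap {p q : FreeGroup α} (h : SignedPositivePair i j p q) :
    SignedPositivePair i j q p := by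
  induction h with
  | of_positive h => exact .of_positive h.swap
  | inv_left _ ih => exact ih.inv_right
  | inv_right _ ih => exact ih.inv_left
  | conj g _ ih => exact ih.conj g

/-- From `(p * q, q)`, division leads back to the positive pair `(p, q)` or, up to conjugation and
inversion, to the positive pair `(p, q * p)`. Only for the letters themselves does it change the
signs `e`, `e'`. -/
theorem PositivePair.signedPositivePair_mul_inv {e e' : Bool} {p q : FreeGroup α}
    (h : PositivePair (mk [(i, e)]) (mk [(j, e')]) p q) :
    SignedPositivePair i j (p * q⁻¹) q ∧ SignedPositivePair i j (q * p⁻¹) p := by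
  induction h with
  | base =>
    have h_left : SignedPositivePair i j (mk [(i, e)] * (mk [(j, e')])⁻¹) (mk [(j, e')])⁻¹ :=
      .of_positive (e := e) (e' := !e') PositivePair.base.mul
    have h_right : SignedPositivePair i j (mk [(j, e')] * (mk [(i, e)])⁻¹) (mk [(i, e)])⁻¹ :=
      .of_positive (e := !e) (e' := e') PositivePair.base.swap.mul
    exact ⟨by simpa using h_left.inv_right, by simpa using h_right.inv_right⟩
  | swap _ ih => exact ih.symm
  | @mul p q h _ =>
    have h_conj : SignedPositivePair i j p (p * q) := by
      simpa [mul_assoc] using (SignedPositivePair.of_positive h.swap.mul).swap.conj p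
    exact ⟨by simpa using SignedPositivePair.of_positive h, by simpa using h_conj.inv_left⟩

theorem SignedPositivePair.mul {p q : FreeGroup α} (h : SignedPositivePair i j p q) :
    SignedPositivePair i j (p * q) q ∧ SignedPositivePair i j (p * q⁻¹) q := by
  induction h with
  | of_positive h => exact ⟨.of_positive h.mul, h.signedPositivePair_mul_inv.1⟩
  | @inv_left p q _ ih =>
    exact ⟨by simpa [mul_assoc] using ih.2.inv_left.conj q⁻¹,
      by simpa [mul_assoc] using ih.1.inv_left.conj q⟩
  | inv_right _ ih => exact ⟨ih.2.inv_right, by simpa using ih.1.inv_right⟩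
  | conj g _ ih =>
    exact ⟨by simpa [mul_assoc] using ih.1.conj g, by simpa [mul_assoc] using ih.2.conj g⟩

theorem NielsenEquiv.signedPositivePair {u v : FreeGroup α} (h : NielsenEquiv (of i) (of j) u v) :
    SignedPositivePair i j u v := by
  induction h with
  | refl => exact .of_positive (e := true) (e' := true) .base
  | swap _ ih => exact ih.swap
  | inv _ ih => exact ih.inv_left
  | mul _ ih => exact ih.mul.1
  | conj g _ ih => exact ih.conj g

end PositivePair

section RepeatCount

variable {α : Type*} [DecidableEq α]

/-- The number of positions at which a letter `i ^ ±1` is followed by an equal letter. -/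
def repeatCount (i : α) : List (α × Bool) → ℕ
  | [] | [_] => 0
  | a :: b :: l => (if a = b ∧ a.1 = i then 1 else 0) + repeatCount i (b :: l)

variable (i : α)

theorem repeatCount_le_repeatCount_cons (a : α × Bool) (l : List (α × Bool)) :
    repeatCount i l ≤ repeatCount i (a :: l) := by
  cases l with
  | nil => rfl
  | cons b l => exact Nat.le_add_left _ _

theorem repeatCount_cons_le (a : α × Bool) (l : List (α × Bool)) :
    repeatCount i (a :: l) ≤ repeatCount i l + 1 := by
  cases l with
  | nil => exact Nat.zero_le _
  | cons b l =>
    rw [repeatCount]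
    split_ifs <;> omega

theorem add_repeatCount_le_repeatCount_append (l m : List (α × Bool)) :
    repeatCount i l + repeatCount i m ≤ repeatCount i (l ++ m) := by
  fun_induction repeatCount i l with
  | case1 => simp
  | case2 a => simpa using repeatCount_le_repeatCount_cons i a m
  | case3 a b l ih =>
    simp only [List.cons_append, repeatCount] at ih ⊢
    omega

theorem repeatCount_append_le (l m : List (α × Bool)) :
    repeatCount i (l ++ m) ≤ repeatCount i l + repeatCount i m + 1 := by
  fun_induction repeatCount i l with
  | case1 => simp
  | case2 a => simpa using repeatCount_cons_le i a m
  | case3 a b l ih =>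
    simp only [List.cons_append, repeatCount] at ih ⊢
    omega

theorem repeatCount_append_pair (l : List (α × Bool)) (a b : α × Bool) :
    repeatCount i (l ++ [a, b]) = repeatCount i (l ++ [a]) + if a = b ∧ a.1 = i then 1 else 0 := by
  fun_induction repeatCount i l with
  | case1 => simp [repeatCount]
  | case2 => simp [repeatCount]
  | case3 c d l ih =>
    simp only [List.cons_append, repeatCount] at ih ⊢
    omega

theorem repeatCount_invRev (l : List (α × Bool)) : repeatCount i (invRev l) = repeatCount i l := by
  fun_induction repeatCount i l with
  | case1 => rfl
  | case2 => rfl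
  | case3 a b l ih =>
    have h_sign : ((b.1, !b.2) = (a.1, !a.2) ∧ b.1 = i) ↔ (a = b ∧ a.1 = i) := by
      simp only [Prod.ext_iff, Bool.not_inj_iff]
      grind
    have h_append : invRev (a :: b :: l) = invRev l ++ [(b.1, !b.2), (a.1, !a.2)] := by
      simp [invRev]
    have h_tail : invRev (b :: l) = invRev l ++ [(b.1, !b.2)] := by simp [invRev]
    rw [h_append, repeatCount_append_pair, ← h_tail, ih, add_comm, if_congr h_sign rfl rfl]

theorem repeatCount_replicate (e : Bool) (k : ℕ) :
    repeatCount i (List.replicate (k + 1) (i, e)) = k := by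
  induction k with
  | zero => rfl
  | succ k ih =>
    rw [List.replicate_succ] at ih
    rw [List.replicate_succ, List.replicate_succ, repeatCount, ih, if_pos ⟨rfl, rfl⟩, add_comm]

theorem mul_repeatCount_le_repeatCount_flatten_replicate (l : List (α × Bool)) (n : ℕ) :
    n * repeatCount i l ≤ repeatCount i (List.replicate n l).flatten := by
  induction n with
  | zero => simp
  | succ n ih =>
    rw [List.replicate_succ, List.flatten_cons, add_mul, one_mul]
    have := add_repeatCount_le_repeatCount_append i l (List.replicate n l).flatten
    omega

theorem repeatCount_le_of_infix {l m : List (α × Bool)} (h : l <:+: m) :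
    repeatCount i l ≤ repeatCount i m := by
  obtain ⟨s, t, rfl⟩ := h
  have h_left := add_repeatCount_le_repeatCount_append i s l
  have h_right := add_repeatCount_le_repeatCount_append i (s ++ l) t
  omega

theorem repeatCount_toWord_inv (x : FreeGroup α) :
    repeatCount i x⁻¹.toWord = repeatCount i x.toWord := by
  rw [toWord_inv, repeatCount_invRev]

theorem repeatCount_toWord_mul_le (x y : FreeGroup α) :
    repeatCount i (x * y).toWord ≤ repeatCount i x.toWord + repeatCount i y.toWord + 1 := by
  obtain ⟨p, s, t, hx, hy, -, h⟩ := exists_toWord_inv_mul x⁻¹ y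
  rw [inv_inv] at h
  rw [← repeatCount_toWord_inv i x, hx, hy, h]
  have h_st := repeatCount_append_le i (invRev s) t
  have h_ps := add_repeatCount_le_repeatCount_append i p s
  have h_pt := add_repeatCount_le_repeatCount_append i p t
  rw [repeatCount_invRev] at h_st
  omega

variable {i}

theorem repeatCount_toWord_map_le {β : Type*} [DecidableEq β] {f : FreeGroup β →* FreeGroup α}
    (hf : ∀ x, repeatCount i (f (of x)).toWord = 0) (x : FreeGroup β) :
    repeatCount i (f x).toWord ≤ x.norm := by
  have h_letter : ∀ z, repeatCount i (f (mk [z])).toWord = 0 := by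
    rintro ⟨b, _ | _⟩
    · rw [← hf b, ← repeatCount_toWord_inv i (f (of b)), ← _root_.map_inv]
      rfl
    · exact hf b
  have h_word : ∀ l : List (β × Bool), repeatCount i (f (mk l)).toWord ≤ l.length := by
    intro l
    induction l with
    | nil => simp [← one_eq_mk, repeatCount]
    | cons z l ih =>
      have h_mul := repeatCount_toWord_mul_le i (f (mk [z])) (f (mk l))
      have h_z := h_letter z
      rw [map_mk_cons, List.length_cons]
      omega
  have h_x := h_word x.toWord
  rwa [mk_toWord] at h_x

theorem mul_repeatCount_le_repeatCount_toWord_pow {c : FreeGroup α}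
    (hc : IsCyclicallyReduced c.toWord) (n : ℕ) :
    n * repeatCount i c.toWord ≤ repeatCount i (c ^ n).toWord := by
  rw [toWord_pow, (hc.flatten_replicate n).isReduced.reduce_eq]
  exact mul_repeatCount_le_repeatCount_flatten_replicate i c.toWord n

theorem freeGroup_norm_pow_le (x : FreeGroup α) (n : ℕ) : (x ^ n).norm ≤ n * x.norm := by
  induction n with
  | zero => simp
  | succ n ih =>
    rw [pow_succ, add_mul, one_mul]
    exact (FreeGroup.norm_mul_le _ _).trans (Nat.add_le_add_right ih _)

theorem le_of_forall_mul_le_mul_add {a b d : ℕ} (h : ∀ n, n * a ≤ n * b + d) : a ≤ b := by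
  by_contra! hab
  have := h (d + 1)
  nlinarith

/-- Conjugation by `h` changes `repeatCount` by a bounded amount, which is negligible when comparing
high powers of `c` and `x`. -/
theorem repeatCount_le_norm_of_map_eq_conj {β : Type*} [DecidableEq β]
    {f : FreeGroup β →* FreeGroup α} (hf : ∀ x, repeatCount i (f (of x)).toWord = 0)
    {x : FreeGroup β} {c h : FreeGroup α} (hc : IsCyclicallyReduced c.toWord)
    (hx : f x = h * c * h⁻¹) : repeatCount i c.toWord ≤ x.norm := by
  refine le_of_forall_mul_le_mul_add (d := 2 * repeatCount i h.toWord + 2) fun n => ?_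
  have h_pow : c ^ n = h⁻¹ * f (x ^ n) * h := by
    rw [map_pow, hx, conj_pow]
    group
  calc n * repeatCount i c.toWord
      ≤ repeatCount i (h⁻¹ * f (x ^ n) * h).toWord :=
        h_pow ▸ mul_repeatCount_le_repeatCount_toWord_pow hc n
    _ ≤ repeatCount i (f (x ^ n)).toWord + (2 * repeatCount i h.toWord + 2) := by
        have h_left := repeatCount_toWord_mul_le i h⁻¹ (f (x ^ n))
        have h_right := repeatCount_toWord_mul_le i (h⁻¹ * f (x ^ n)) h
        rw [repeatCount_toWord_inv] at h_left
        omega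
    _ ≤ n * x.norm + (2 * repeatCount i h.toWord + 2) := by
        gcongr
        exact (repeatCount_toWord_map_le hf _).trans (freeGroup_norm_pow_le x n)

theorem repeatCount_eq_zero_of_mem_closure {x y : α × Bool} (hxy : x.1 ≠ y.1) {g : FreeGroup α}
    (hg : g ∈ Submonoid.closure {mk [x] * mk [y], mk [y]}) : repeatCount x.1 g.toWord = 0 := by
  suffices h : ∃ l : List (α × Bool), g = mk l ∧ IsReduced l ∧ repeatCount x.1 l = 0 ∧
      ∀ z ∈ l.head?, z = x ∨ z = y by
    obtain ⟨l, rfl, hl, h_count, -⟩ := h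
    rwa [toWord_mk, hl.reduce_eq]
  have h_cons : ∀ l : List (α × Bool), IsReduced l → repeatCount x.1 l = 0 →
      (∀ z ∈ l.head?, z = x ∨ z = y) → IsReduced (y :: l) ∧ repeatCount x.1 (y :: l) = 0 := by
    intro l hl h_count h_head
    match l with
    | [] => simp [repeatCount]
    | z :: l =>
      rw [isReduced_cons_cons, repeatCount, h_count]
      obtain rfl | rfl := h_head z rfl <;> simp [hl, hxy.symm]
  induction hg using Submonoid.closure_induction_left with
  | one => exact ⟨[], by simp [← one_eq_mk, repeatCount]⟩
  | mul_left s hs g _ ih =>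
    obtain ⟨l, rfl, hl, h_count, h_head⟩ := ih
    obtain ⟨hyl, hyl_count⟩ := h_cons l hl h_count h_head
    obtain rfl | rfl := hs
    · refine ⟨x :: y :: l, by simp [mul_mk], isReduced_cons_cons.2 ⟨fun h => absurd h hxy, hyl⟩, ?_,
        by simp⟩
      rw [repeatCount, hyl_count, if_neg fun h => hxy (congrArg Prod.fst h.1)]
    · exact ⟨y :: l, by simp [mul_mk], hyl, hyl_count, by simp⟩

theorem PositivePair.exists_repeatCount_eq_zero {x y : α × Bool} (hxy : x.1 ≠ y.1)
    {p q : FreeGroup α} (h : PositivePair (mk [x]) (mk [y]) p q) :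
    ∃ k, repeatCount k p.toWord = 0 ∧ repeatCount k q.toWord = 0 := by
  obtain (⟨rfl, rfl⟩ | ⟨rfl, rfl⟩) | ⟨hp, hq⟩ | ⟨hp, hq⟩ := h.eq_or_mem_closure
  · exact ⟨x.1, by simp [toWord_mk, repeatCount]⟩
  · exact ⟨x.1, by simp [toWord_mk, repeatCount]⟩
  · exact ⟨x.1, repeatCount_eq_zero_of_mem_closure hxy hp,
      repeatCount_eq_zero_of_mem_closure hxy hq⟩
  · exact ⟨y.1, repeatCount_eq_zero_of_mem_closure hxy.symm hp,
      repeatCount_eq_zero_of_mem_closure hxy.symm hq⟩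

theorem SignedPositivePair.exists_conj_repeatCount_eq_zero {j : α} (hij : i ≠ j)
    {u v : FreeGroup α} (h : SignedPositivePair i j u v) :
    ∃ k g, repeatCount k (g * u * g⁻¹).toWord = 0 ∧ repeatCount k (g * v * g⁻¹).toWord = 0 := by
  induction h with
  | of_positive h =>
    obtain ⟨k, hp, hq⟩ := h.exists_repeatCount_eq_zero hij
    exact ⟨k, 1, by simpa using hp, by simpa using hq⟩
  | inv_left _ ih =>
    obtain ⟨k, g, hp, hq⟩ := ih
    exact ⟨k, g, by rwa [← conj_inv, repeatCount_toWord_inv], hq⟩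
  | inv_right _ ih =>
    obtain ⟨k, g, hp, hq⟩ := ih
    exact ⟨k, g, hp, by rwa [← conj_inv, repeatCount_toWord_inv]⟩
  | conj h _ ih =>
    obtain ⟨k, g, hp, hq⟩ := ih
    exact ⟨k, g * h⁻¹, by simpa [mul_assoc] using hp, by simpa [mul_assoc] using hq⟩

end RepeatCount

theorem closure_pair_map_of_eq_top {G : Type*} [Group G] {φ : F2 →* G}
    (hφ : Function.Surjective φ) : Subgroup.closure {φ (of 0), φ (of 1)} = ⊤ := by
  have h_range : Set.range (of : Fin 2 → F2) = {of 0, of 1} := by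
    ext x
    simp [Fin.exists_fin_two, eq_comm]
  rw [← Set.image_pair, ← h_range, ← MonoidHom.map_closure, closure_range_of,
    Subgroup.map_top_of_surjective φ hφ]

theorem exists_conj_repeatCount_eq_zero {φ : F2 →* F2} (hφ : Function.Surjective φ) :
    ∃ i g, ∀ x, repeatCount i (g * φ (of x) * g⁻¹).toWord = 0 := by
  have h_nielsen := nielsenEquiv_of_closure_pair_eq_top (closure_pair_map_of_eq_top hφ)
  obtain ⟨i, g, h_zero, h_one⟩ :=
    h_nielsen.signedPositivePair.exists_conj_repeatCount_eq_zero zero_ne_one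
  exact ⟨i, g, Fin.forall_fin_two.2 ⟨h_zero, h_one⟩⟩

theorem CyclicallyReduced.isCyclicallyReduced {c : F2} (h : CyclicallyReduced c.toWord) :
    IsCyclicallyReduced c.toWord :=
  ⟨isReduced_toWord, fun a ha b hb hab =>
    not_not.1 fun h_ne => h b hb a ha (Prod.ext hab (Bool.eq_not_of_ne h_ne))⟩

theorem HasBlock.le_repeatCount {i : Fin 2} {k : ℕ} {c : F2} (h : HasBlock i (k + 1) c) :
    k ≤ repeatCount i c.toWord := by
  obtain h | h := h <;> exact (repeatCount_replicate i _ k).ge.trans (repeatCount_le_of_infix i h)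

theorem blocking_subword_certifies_not_in_orbit_general (φ : F2 →* F2)
    (hφ : Function.Surjective φ) :
    ∃ i, ∀ w' : F2, ¬ ∃ c h : F2, φ w' = h * c * h⁻¹ ∧ CyclicallyReduced c.toWord ∧
      HasBlock i (w'.toWord.length + 2) c := by
  obtain ⟨i, g, hg⟩ := exists_conj_repeatCount_eq_zero hφ
  refine ⟨i, fun w' ⟨c, h, hw', hc, h_block⟩ => ?_⟩
  have h_conj : (MulAut.conj g).toMonoidHom.comp φ w' = g * h * c * (g * h)⁻¹ := by
    simp [hw', mul_assoc]
  have h_le := repeatCount_le_norm_of_map_eq_conj (by simpa using hg) hc.isCyclicallyReduced h_conj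
  exact absurd h_block.le_repeatCount (Nat.not_le.2 (Nat.lt_succ_of_le h_le))

/-- If a cyclically reduced `w` of length at least 1 contains, as a cyclic word
(i.e. in some cyclically reduced conjugate), a block of `a`'s and a block of `b`'s
each of absolute exponent at least `|w'| + 2`, then `w` is not an automorphic image
of `w'`. -/
theorem blocking_subword_certifies_not_in_orbit (w w' : F2)
    (hcr : CyclicallyReduced w.toWord) (hlen : 1 ≤ w.toWord.length)
    (ha : ∃ c h : F2, w = h * c * h⁻¹ ∧ CyclicallyReduced c.toWord ∧
      HasBlock 0 (w'.toWord.length + 2) c)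
    (hb : ∃ c h : F2, w = h * c * h⁻¹ ∧ CyclicallyReduced c.toWord ∧
      HasBlock 1 (w'.toWord.length + 2) c) :
    ¬ ∃ φ : F2 ≃* F2, φ w' = w := by
  rintro ⟨φ, rfl⟩
  obtain ⟨i, h_orbit⟩ := blocking_subword_certifies_not_in_orbit_general φ.toMonoidHom φ.surjective
  fin_cases i
  exacts [h_orbit w' ha, h_orbit w' hb]
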